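/- arXiv:1712.03205 — 2 statements merged into one kernel-verified Lean document; each statement's English description precedes it below -/
import Mathlib

section
/- Let τ ∈ ℂ with Im τ > 0 and let ξ, η ∈ ℂ satisfy θ(ξ, τ) ≠ 0 and θ(η, τ) ≠ 0. Then for all integers l and m, the Kronecker function satisfies the lattice quasi-periodicity F(ξ + l + m·τ, η, τ) = exp(−2πi m η) · F(ξ, η, τ). -/
open Complex

/-- The "two thirds of the Jacobi triple product formula":
`θ(ξ, τ) = q^{1/12} (z^{1/2} - z^{-1/2}) ∏_{j≥1} (1 - qʲz) ∏_{j≥1} (1 - qʲz⁻¹)`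
with `q = exp(2πiτ)`, `z = exp(2πiξ)`. -/
noncomputable def theta (ξ τ : ℂ) : ℂ :=
  Complex.exp ((Real.pi : ℂ) * Complex.I * τ / 6) *
    (Complex.exp ((Real.pi : ℂ) * Complex.I * ξ) -
      Complex.exp (-((Real.pi : ℂ) * Complex.I * ξ))) *
    (∏' j : ℕ, (1 - Complex.exp (2 * (Real.pi : ℂ) * Complex.I * (((j : ℂ) + 1) * τ + ξ)))) *
    (∏' j : ℕ, (1 - Complex.exp (2 * (Real.pi : ℂ) * Complex.I * (((j : ℂ) + 1) * τ - ξ))))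

/-- The Kronecker function `F(ξ, η, τ) = θ′(0, τ) · θ(ξ + η, τ) / (θ(ξ, τ) · θ(η, τ))`,
where `θ′(0, τ)` is the derivative of `ξ ↦ θ(ξ, τ)` at `ξ = 0`. -/
noncomputable def kronF (ξ η τ : ℂ) : ℂ :=
  deriv (fun z => theta z τ) 0 * theta (ξ + η) τ / (theta ξ τ * theta η τ)

/-!
With `q = exp (2πiτ)` and `z = exp (2πiξ)`, the function `θ(ξ, τ)` is, up to a factor depending only
on `τ`, equal to `exp (-πiξ) · ϑ(z; q)`, where `ϑ(z; q) = (1 - z) ∏ (1 - qʲz) ∏ (1 - qʲ/z)`.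
Moving one factor from one product to the other gives `ϑ(qz; q) = -z⁻¹ ϑ(z; q)`. Hence `θ` changes
sign under `ξ ↦ ξ + 1` and acquires the factor `-exp (-(2πiξ + πiτ))` under `ξ ↦ ξ + τ`. In the
quotient `θ(ξ + η, τ) / θ(ξ, τ)` the signs cancel, and of the exponentials `exp (-2πiη)` is left.
-/

open scoped Real

lemma apply_add_zsmul_of_apply_add {A G₀ : Type*} [AddGroup A] [GroupWithZero G₀] {f : A → G₀}
    {c : A} {a : G₀} (ha : a ≠ 0) (h : ∀ x, f (x + c) = a * f x) (x : A) (n : ℤ) :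
    f (x + n • c) = a ^ n * f x := by
  induction n using Int.induction_on with
  | zero => simp
  | succ n ih =>
    rw [add_one_zsmul, ← add_assoc, h, ih, ← mul_assoc, ← zpow_one_add₀ ha, add_comm 1]
  | pred n ih =>
    refine mul_left_cancel₀ ha ?_
    rw [← h, add_assoc, ← add_one_zsmul, sub_add_cancel, ih, ← mul_assoc, ← zpow_one_add₀ ha,
      add_sub_cancel]

section QPochhammer

/-- The infinite `q`-Pochhammer symbol `(a; q)_∞ = ∏_{j ≥ 0} (1 - a qʲ)`, the building block of the
product formula for theta functions. It has the value `1` when the product does not converge. -/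
noncomputable def qPochhammerInf {R : Type*} [CommRing R] [TopologicalSpace R] (a q : R) : R :=
  ∏' j : ℕ, (1 - a * q ^ j)

variable {R : Type*} [NormedCommRing R] [NormOneClass R] [CompleteSpace R] {q : R}

lemma multipliable_one_sub_mul_pow (a : R) (hq : ‖q‖ < 1) :
    Multipliable fun j : ℕ ↦ 1 - a * q ^ j := by
  have summable_norm : Summable fun j : ℕ ↦ ‖-(a * q ^ j)‖ := by
    refine .of_nonneg_of_le (fun _ ↦ norm_nonneg _) (fun j ↦ ?_)
      ((summable_geometric_of_lt_one (norm_nonneg q) hq).mul_left ‖a‖)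
    rw [norm_neg]
    exact norm_mul_le_of_le le_rfl (norm_pow_le q j)
  simpa only [sub_eq_add_neg] using multipliable_one_add_of_summable summable_norm

lemma qPochhammerInf_eq_one_sub_mul (a : R) (hq : ‖q‖ < 1) :
    qPochhammerInf a q = (1 - a) * qPochhammerInf (q * a) q := by
  have shift (j : ℕ) : 1 - a * q ^ (j + 1) = 1 - q * a * q ^ j := by ring
  have multipliable_shift : Multipliable fun j : ℕ ↦ 1 - a * q ^ (j + 1) :=
    (multipliable_one_sub_mul_pow (q * a) hq).congr fun j ↦ (shift j).symm
  calc qPochhammerInf a q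
      = (1 - a * q ^ 0) * ∏' j : ℕ, (1 - a * q ^ (j + 1)) := tprod_eq_zero_mul' multipliable_shift
    _ = (1 - a) * qPochhammerInf (q * a) q := by
        rw [pow_zero, mul_one, tprod_congr shift, qPochhammerInf]

end QPochhammer

/-- The multiplicative theta function `ϑ(z; q) = (1 - z) (qz; q)_∞ (q/z; q)_∞`, through which
`theta` depends on `z = exp (2πiξ)`. For `‖q‖ < 1` it is `(z; q)_∞ (q/z; q)_∞`; the factor `1 - z`
is kept apart as in the definition of `theta`. -/
noncomputable def qTheta {K : Type*} [Field K] [TopologicalSpace K] (z q : K) : K :=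
  (1 - z) * qPochhammerInf (q * z) q * qPochhammerInf (q * z⁻¹) q

lemma qTheta_mul_left {K : Type*} [NormedField K] [CompleteSpace K] {z q : K} (hz : z ≠ 0)
    (hq₀ : q ≠ 0) (hq : ‖q‖ < 1) :
    qTheta (q * z) q = -z⁻¹ * qTheta z q := by
  have cancel : q * (q * z)⁻¹ = z⁻¹ := by field_simp
  calc qTheta (q * z) q
      = (1 - q * z) * qPochhammerInf (q * (q * z)) q * qPochhammerInf z⁻¹ q := by
        rw [qTheta, cancel]
    _ = qPochhammerInf (q * z) q * ((1 - z⁻¹) * qPochhammerInf (q * z⁻¹) q) := by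
        rw [← qPochhammerInf_eq_one_sub_mul _ hq, ← qPochhammerInf_eq_one_sub_mul _ hq]
    _ = -z⁻¹ * qTheta z q := by
        rw [qTheta]
        field_simp
        ring

section Theta

variable (ξ τ : ℂ)

lemma qPochhammerInf_exp (x : ℂ) :
    qPochhammerInf (exp (2 * π * I * τ) * exp (2 * π * I * x)) (exp (2 * π * I * τ)) =
      ∏' j : ℕ, (1 - exp (2 * π * I * ((j + 1) * τ + x))) := by
  refine tprod_congr fun j ↦ ?_
  rw [← exp_nat_mul, ← exp_add, ← exp_add]
  ring_nf

lemma theta_eq_qTheta :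
    theta ξ τ = -exp (π * I * τ / 6) * exp (-(π * I * ξ)) *
      qTheta (exp (2 * π * I * ξ)) (exp (2 * π * I * τ)) := by
  have half_powers : exp (π * I * ξ) - exp (-(π * I * ξ)) =
      -exp (-(π * I * ξ)) * (1 - exp (2 * π * I * ξ)) := by
    rw [mul_sub, neg_mul, neg_mul, ← exp_add]
    ring_nf
  rw [theta, qTheta, ← exp_neg, ← mul_neg (2 * π * I), qPochhammerInf_exp, qPochhammerInf_exp,
    half_powers]
  simp only [← sub_eq_add_neg]
  ring

lemma theta_add_one : theta (ξ + 1) τ = -theta ξ τ := by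
  have z_periodic : exp (2 * π * I * (ξ + 1)) = exp (2 * π * I * ξ) := by
    rw [mul_add_one, exp_periodic]
  have half_power_antiperiodic : exp (-(π * I * (ξ + 1))) = -exp (-(π * I * ξ)) := by
    rw [mul_add_one, neg_add', exp_sub_pi_mul_I]
  rw [theta_eq_qTheta, theta_eq_qTheta, z_periodic, half_power_antiperiodic]
  ring

variable {τ}

lemma theta_add_tau (hτ : 0 < τ.im) :
    theta (ξ + τ) τ = -exp (-(2 * π * I * ξ + π * I * τ)) * theta ξ τ := by
  have norm_q_lt_one := UpperHalfPlane.norm_exp_two_pi_I_lt_one ⟨τ, hτ⟩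
  have z_shift : exp (2 * π * I * (ξ + τ)) = exp (2 * π * I * τ) * exp (2 * π * I * ξ) := by
    rw [← exp_add]
    ring_nf
  have half_power_shift : exp (-(π * I * (ξ + τ))) = exp (-(π * I * ξ)) * exp (-(π * I * τ)) := by
    rw [← exp_add]
    ring_nf
  rw [theta_eq_qTheta, theta_eq_qTheta, z_shift,
    qTheta_mul_left (exp_ne_zero _) (exp_ne_zero _) norm_q_lt_one, half_power_shift, neg_add,
    exp_add, exp_neg (2 * π * I * ξ)]
  ring

end Theta

section Kronecker

variable (η τ : ℂ)

lemma kronF_periodic_one : Function.Periodic (fun ξ ↦ kronF ξ η τ) 1 := by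
  intro ξ
  simp only [kronF, add_right_comm ξ 1 η, theta_add_one, mul_neg, neg_mul, neg_div_neg_eq]

variable {τ}

lemma kronF_add_tau (hτ : 0 < τ.im) (ξ : ℂ) :
    kronF (ξ + τ) η τ = exp (-(2 * π * I * η)) * kronF ξ η τ := by
  have exp_split : exp (-(2 * π * I * (ξ + η) + π * I * τ)) =
      exp (-(2 * π * I * η)) * exp (-(2 * π * I * ξ + π * I * τ)) := by
    rw [← exp_add]
    ring_nf
  rw [kronF, kronF, add_right_comm, theta_add_tau _ hτ, theta_add_tau _ hτ, exp_split]
  field_simp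

end Kronecker

/-- lattice quasi-periodicity
`F(ξ + l + mτ, η, τ) = exp(-2πimη) · F(ξ, η, τ)` for all integers `l`, `m`. -/
theorem stmt_11 (τ : ℂ) (hτ : 0 < τ.im) (ξ η : ℂ)
    (hξ : theta ξ τ ≠ 0) (hη : theta η τ ≠ 0) (l m : ℤ) :
    kronF (ξ + (l : ℂ) + (m : ℂ) * τ) η τ =
      Complex.exp (-(2 * (Real.pi : ℂ) * Complex.I * (m : ℂ) * η)) * kronF ξ η τ := by
  have shift_tau := apply_add_zsmul_of_apply_add (f := (kronF · η τ)) (exp_ne_zero _)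
    (kronF_add_tau η hτ) (ξ + l) m
  have shift_one : kronF (ξ + l) η τ = kronF ξ η τ := by
    simpa only [mul_one] using (kronF_periodic_one η τ).int_mul l ξ
  have exp_zpow : exp (-(2 * π * I * m * η)) = exp (-(2 * π * I * η)) ^ m := by
    rw [← exp_int_mul]
    ring_nf
  rw [← zsmul_eq_mul, shift_tau, shift_one, exp_zpow]
end

section
/- Fix an integer n ≥ 1. Let P_n be the quotient of the free Lie algebra over ℚ on generators X_1, …, X_n, Y_1, …, Y_n by the Lie ideal generated by the relators: ⁅X_i, X_j⁆ and ⁅Y_i, Y_j⁆ for i < j; ⁅X_i, Y_j⁆ − ⁅X_j, Y_i⁆ for i < j; ⁅⁅X_j, Y_i⁆, Y_i + Y_j⁆ and ⁅X_j + X_i, ⁅Y_i, X_j⁆⁆ for i < j; ⁅Y_k, ⁅Y_i, X_j⁆⁆ and ⁅X_k, ⁅Y_i, X_j⁆⁆ for i < j < k. Then the assignment sending the generator X_i of P_n to the class of X_i and the generator Y_i to the class of Y_i (for 1 ≤ i ≤ n, viewed among the n+1 indices of t̄_{1,n+1}) determines a well-defined Lie algebra homomorphism P_n → t̄_{1,n+1},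 and this homomorphism is an isomorphism; i.e. t̄_{1,n+1} admits the presentation P_n. -/
/-- Generators of the Lie algebra `t_{1,n}`: `X_i`, `Y_i` (`i ∈ Fin n`), and
`t_{ij}` for `i ≠ j`. -/
abbrev ElGen (n : ℕ) : Type := Fin n ⊕ Fin n ⊕ {p : Fin n × Fin n // p.1 ≠ p.2}

/-- The generator `X_i` of the free Lie algebra. -/
noncomputable def genX {n : ℕ} (i : Fin n) : FreeLieAlgebra ℚ (ElGen n) :=
  FreeLieAlgebra.of ℚ (Sum.inl i)

/-- The generator `Y_i` of the free Lie algebra. -/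
noncomputable def genY {n : ℕ} (i : Fin n) : FreeLieAlgebra ℚ (ElGen n) :=
  FreeLieAlgebra.of ℚ (Sum.inr (Sum.inl i))

/-- The generator `t_{ij}` (`i ≠ j`) of the free Lie algebra. -/
noncomputable def genT {n : ℕ} (i j : Fin n) (h : i ≠ j) : FreeLieAlgebra ℚ (ElGen n) :=
  FreeLieAlgebra.of ℚ (Sum.inr (Sum.inr ⟨(i, j), h⟩))

/-- The relators defining `t_{1,n}`. -/
def t1Rel (n : ℕ) : Set (FreeLieAlgebra ℚ (ElGen n)) :=
  -- t_{ij} = t_{ji}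
  {z | ∃ i j, ∃ h : i ≠ j, z = genT i j h - genT j i h.symm} ∪
  -- t_{ij} = ⁅X_i, Y_j⁆
  {z | ∃ i j, ∃ h : i ≠ j, z = genT i j h - ⁅genX i, genY j⁆} ∪
  -- ⁅X_i, X_j⁆ = 0, ⁅Y_i, Y_j⁆ = 0
  {z | ∃ i j, i ≠ j ∧ z = ⁅genX i, genX j⁆} ∪
  {z | ∃ i j, i ≠ j ∧ z = ⁅genY i, genY j⁆} ∪
  -- ⁅X_i, Y_i⁆ = -Σ_{j ≠ i} t_{ij}
  {z | ∃ i, z = ⁅genX i, genY i⁆ + ∑ j : Fin n, if h : i ≠ j then genT i j h else 0} ∪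
  -- ⁅t_{ij}, t_{ik} + t_{jk}⁆ = 0 for i, j, k distinct
  {z | ∃ i j k, ∃ (hij : i ≠ j) (hik : i ≠ k) (hjk : j ≠ k),
    z = ⁅genT i j hij, genT i k hik + genT j k hjk⁆} ∪
  -- ⁅t_{ij}, t_{kl}⁆ = 0 for i, j, k, l distinct
  {z | ∃ i j k l, ∃ (hij : i ≠ j) (hkl : k ≠ l),
    i ≠ k ∧ i ≠ l ∧ j ≠ k ∧ j ≠ l ∧ z = ⁅genT i j hij, genT k l hkl⁆} ∪
  -- ⁅X_i, t_{jk}⁆ = 0, ⁅Y_i, t_{jk}⁆ = 0 for i, j, k distinct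
  {z | ∃ i j k, ∃ hjk : j ≠ k, i ≠ j ∧ i ≠ k ∧ z = ⁅genX i, genT j k hjk⁆} ∪
  {z | ∃ i j k, ∃ hjk : j ≠ k, i ≠ j ∧ i ≠ k ∧ z = ⁅genY i, genT j k hjk⁆} ∪
  -- ⁅X_i + X_j, t_{ij}⁆ = 0, ⁅Y_i + Y_j, t_{ij}⁆ = 0 for i ≠ j
  {z | ∃ i j, ∃ h : i ≠ j, z = ⁅genX i + genX j, genT i j h⁆} ∪
  {z | ∃ i j, ∃ h : i ≠ j, z = ⁅genY i + genY j, genT i j h⁆}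

/-- The Lie ideal generated by the relators of `t_{1,n}`. -/
noncomputable def t1Ideal (n : ℕ) : LieIdeal ℚ (FreeLieAlgebra ℚ (ElGen n)) :=
  LieSubmodule.lieSpan ℚ (FreeLieAlgebra ℚ (ElGen n)) (t1Rel n)

/-- The Lie algebra `t_{1,n}`. -/
abbrev t1 (n : ℕ) : Type _ := FreeLieAlgebra ℚ (ElGen n) ⧸ t1Ideal n

/-- The quotient map onto `t_{1,n}`. -/
noncomputable def t1Mk (n : ℕ) : FreeLieAlgebra ℚ (ElGen n) → t1 n :=
  LieSubmodule.Quotient.mk (N := t1Ideal n)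

/-- The Lie ideal of `t_{1,n}` generated by `Σ X_i` and `Σ Y_i`. -/
noncomputable def centralIdeal (n : ℕ) : LieIdeal ℚ (t1 n) :=
  LieSubmodule.lieSpan ℚ (t1 n)
    {t1Mk n (∑ i : Fin n, genX i), t1Mk n (∑ i : Fin n, genY i)}

/-- The Lie algebra `t̄_{1,n}`, the quotient of `t_{1,n}` by the central elements
`Σ X_i` and `Σ Y_i`. -/
abbrev t1Bar (n : ℕ) : Type _ := t1 n ⧸ centralIdeal n

/-- The canonical map from the free Lie algebra onto `t̄_{1,n}`. -/
noncomputable def t1BarMk (n : ℕ) : FreeLieAlgebra ℚ (ElGen n) → t1Bar n :=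
  fun x => LieSubmodule.Quotient.mk (N := centralIdeal n) (t1Mk n x)

/-- Generators of the presentation `P_n`: `X_i` and `Y_i` for `i ∈ Fin n`. -/
abbrev PGen (n : ℕ) : Type := Fin n ⊕ Fin n

/-- The generator `X_i` of the free Lie algebra on `PGen n`. -/
noncomputable def pX {n : ℕ} (i : Fin n) : FreeLieAlgebra ℚ (PGen n) :=
  FreeLieAlgebra.of ℚ (Sum.inl i)

/-- The generator `Y_i` of the free Lie algebra on `PGen n`. -/
noncomputable def pY {n : ℕ} (i : Fin n) : FreeLieAlgebra ℚ (PGen n) :=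
  FreeLieAlgebra.of ℚ (Sum.inr i)

/-- The relators defining the presentation `P_n`. -/
def pRel (n : ℕ) : Set (FreeLieAlgebra ℚ (PGen n)) :=
  -- ⁅X_i, X_j⁆ and ⁅Y_i, Y_j⁆ for i < j
  {z | ∃ i j, i < j ∧ z = ⁅pX i, pX j⁆} ∪
  {z | ∃ i j, i < j ∧ z = ⁅pY i, pY j⁆} ∪
  -- ⁅X_i, Y_j⁆ − ⁅X_j, Y_i⁆ for i < j
  {z | ∃ i j, i < j ∧ z = ⁅pX i, pY j⁆ - ⁅pX j, pY i⁆} ∪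
  -- ⁅⁅X_j, Y_i⁆, Y_i + Y_j⁆ and ⁅X_j + X_i, ⁅Y_i, X_j⁆⁆ for i < j
  {z | ∃ i j, i < j ∧ z = ⁅⁅pX j, pY i⁆, pY i + pY j⁆} ∪
  {z | ∃ i j, i < j ∧ z = ⁅pX j + pX i, ⁅pY i, pX j⁆⁆} ∪
  -- ⁅Y_k, ⁅Y_i, X_j⁆⁆ and ⁅X_k, ⁅Y_i, X_j⁆⁆ for i < j < k
  {z | ∃ i j k, i < j ∧ j < k ∧ z = ⁅pY k, ⁅pY i, pX j⁆⁆} ∪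
  {z | ∃ i j k, i < j ∧ j < k ∧ z = ⁅pX k, ⁅pY i, pX j⁆⁆}

/-- The Lie ideal generated by the relators of `P_n`. -/
noncomputable def pIdeal (n : ℕ) : LieIdeal ℚ (FreeLieAlgebra ℚ (PGen n)) :=
  LieSubmodule.lieSpan ℚ (FreeLieAlgebra ℚ (PGen n)) (pRel n)

/-- The presented Lie algebra `P_n`. -/
abbrev PAlg (n : ℕ) : Type _ := FreeLieAlgebra ℚ (PGen n) ⧸ pIdeal n

/-- The quotient map onto `P_n`. -/
noncomputable def pMk (n : ℕ) : FreeLieAlgebra ℚ (PGen n) → PAlg n :=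
  LieSubmodule.Quotient.mk (N := pIdeal n)

/-!
Call families `x, y` in a Lie algebra elliptic if they satisfy the relations of `P_n`; by symmetry
these may be read for all distinct indices. Homomorphisms out of `P_n` are elliptic families
indexed by `Fin n`. Homomorphisms out of `t̄_{1,n+1}` are elliptic families indexed by `Fin (n + 1)`
with `∑ x = ∑ y = 0`: the `t_{ij} = ⁅x_i, y_j⁆` are redundant generators, and the relations among
them follow from the Jacobi identity. Adjoining `-∑ x` and `-∑ y` as last members turns an elliptic
family of the first kind into one of the second, so both Lie algebras have the same universal
property.
-/

section Quotient

variable {R L L' : Type*} [CommRing R] [LieRing L] [LieAlgebra R L] [LieRing L'] [LieAlgebra R L']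

/-- The quotient map by a Lie ideal as a homomorphism of Lie algebras (`LieSubmodule.Quotient.mk'`
is only a homomorphism of Lie modules). -/
def lieQuotientMk (I : LieIdeal R L) : L →ₗ⁅R⁆ L ⧸ I :=
  { I.toSubmodule.mkQ with
    toFun := LieSubmodule.Quotient.mk
    map_lie' := rfl }

theorem lieQuotientMk_surjective (I : LieIdeal R L) : Function.Surjective (lieQuotientMk I) :=
  Quot.mk_surjective

theorem lieQuotientMk_lieSpan_eq_zero {S : Set L} {z : L} (hz : z ∈ S) :
    lieQuotientMk (LieSubmodule.lieSpan R L S) z = 0 :=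
  LieSubmodule.Quotient.mk_eq_zero'.2 (LieSubmodule.subset_lieSpan hz)

theorem lieQuotient_hom_ext {I : LieIdeal R L} {f g : L ⧸ I →ₗ⁅R⁆ L'}
    (h : f.comp (lieQuotientMk I) = g.comp (lieQuotientMk I)) : f = g :=
  LieHom.ext <| (lieQuotientMk_surjective I).forall.2 <| LieHom.congr_fun h

/-- The homomorphism induced on `L ⧸ I`, where `I` is the Lie ideal generated by `S`, by a
homomorphism that vanishes on `S`. -/
def lieSpanQuotientLift (S : Set L) (f : L →ₗ⁅R⁆ L') (hf : ∀ z ∈ S, f z = 0) :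
    (L ⧸ LieSubmodule.lieSpan R L S) →ₗ⁅R⁆ L' :=
  have hker : LieSubmodule.lieSpan R L S ≤ f.ker :=
    LieSubmodule.lieSpan_le.2 fun z hz => LieHom.mem_ker.2 (hf z hz)
  { (LieSubmodule.lieSpan R L S).toSubmodule.liftQ (f : L →ₗ[R] L')
      fun _ hz => LieHom.mem_ker.1 (hker hz) with
    map_lie' := by
      rintro ⟨a⟩ ⟨b⟩
      exact f.map_lie a b }

end Quotient

theorem forall_ne_of_forall_lt {ι : Type*} [LinearOrder ι] {p : ι → ι → ι → Prop}
    (swap_left : ∀ i j k, p i j k → p j i k) (swap_right : ∀ i j k, p i j k → p i k j)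
    (sorted : ∀ i j k, i < j → j < k → p i j k)
    {i j k : ι} (hij : i ≠ j) (hik : i ≠ k) (hjk : j ≠ k) : p i j k := by
  rcases hij.lt_or_gt with hij | hij <;> rcases hik.lt_or_gt with hik | hik <;>
    rcases hjk.lt_or_gt with hjk | hjk <;> grind

section SnocNegSum

variable {A : Type*} [AddCommGroup A] {n : ℕ}

/-- The unique extension of a family indexed by `Fin n` to a family indexed by `Fin (n + 1)` whose
sum vanishes. -/
def snocNegSum (x : Fin n → A) : Fin (n + 1) → A :=
  Fin.snoc (α := fun _ => A) x (-∑ i, x i)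

@[simp]
theorem snocNegSum_castSucc (x : Fin n → A) (i : Fin n) : snocNegSum x i.castSucc = x i := by
  simp [snocNegSum]

@[simp]
theorem snocNegSum_last (x : Fin n → A) : snocNegSum x (Fin.last n) = -∑ i, x i := by
  simp [snocNegSum]

@[simp]
theorem sum_snocNegSum (x : Fin n → A) : ∑ i, snocNegSum x i = 0 := by
  simp [Fin.sum_univ_castSucc]

theorem eq_of_castSucc_eq_of_sum_eq_zero {x x' : Fin (n + 1) → A}
    (h : ∀ i : Fin n, x i.castSucc = x' i.castSucc) (hx : ∑ i, x i = 0) (hx' : ∑ i, x' i = 0) :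
    x = x' := by
  rw [Fin.sum_univ_castSucc, add_eq_zero_iff_eq_neg'] at hx hx'
  funext i
  induction i using Fin.lastCases with
  | cast i => exact h i
  | last => simp_rw [hx, hx', h]

end SnocNegSum

section Elliptic

variable {ι κ L : Type*} [LieRing L] {x y : ι → L}

/-- The half of the elliptic relations that involves iterated brackets with the `x i`. -/
structure IsHalfElliptic (x y : ι → L) : Prop where
  lie_eq_zero : ∀ i j, ⁅x i, x j⁆ = 0
  lie_comm : ∀ i j, ⁅x i, y j⁆ = ⁅x j, y i⁆
  lie_lie_eq_zero : ∀ {i j k}, i ≠ j → i ≠ k → j ≠ k → ⁅x k, ⁅x i, y j⁆⁆ = 0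
  add_lie_lie_eq_zero : ∀ {i j}, i ≠ j → ⁅x i + x j, ⁅x i, y j⁆⁆ = 0

/-- Families `x, y` satisfying the relations of the generators `X, Y` of `P_n`, in a form that does
not refer to an order of the indices. The relations are invariant under exchanging `x` and `y`. -/
structure IsElliptic (x y : ι → L) : Prop where
  left : IsHalfElliptic x y
  right : IsHalfElliptic y x

theorem lie_lie_comm_of_lie_eq_zero {a b : L} (h : ⁅a, b⁆ = 0) (c : L) :
    ⁅a, ⁅b, c⁆⁆ = ⁅b, ⁅a, c⁆⁆ := by
  rw [leibniz_lie, h, zero_lie, zero_add]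

-- The point is that `⁅x k, ⁅x i, y j⁆⁆` is symmetric in all three indices.
theorem lie_lie_eq_zero_of_lt [LinearOrder ι] (hxx : ∀ i j, ⁅x i, x j⁆ = 0)
    (hxy : ∀ i j, ⁅x i, y j⁆ = ⁅x j, y i⁆)
    (sorted : ∀ i j k, i < j → j < k → ⁅x k, ⁅x i, y j⁆⁆ = 0)
    {i j k : ι} (hij : i ≠ j) (hik : i ≠ k) (hjk : j ≠ k) : ⁅x k, ⁅x i, y j⁆⁆ = 0 := by
  refine forall_ne_of_forall_lt (p := fun i j k => ⁅x k, ⁅x i, y j⁆⁆ = 0) ?_ ?_ sorted hij hik hjk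
  · intro i j k h
    rwa [hxy]
  · intro i j k h
    rwa [hxy, lie_lie_comm_of_lie_eq_zero (hxx j k), hxy]

theorem sum_lie_lie_eq_add_lie_lie [Fintype ι] {i j : ι} (hij : i ≠ j)
    (h : ∀ k, i ≠ k → j ≠ k → ⁅x k, ⁅x i, y j⁆⁆ = 0) :
    ⁅∑ k, x k, ⁅x i, y j⁆⁆ = ⁅x i + x j, ⁅x i, y j⁆⁆ := by
  rw [sum_lie, add_lie]
  exact Finset.sum_eq_add i j hij (fun k _ hk => h k hk.1.symm hk.2.symm) (by simp) (by simp)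

theorem lie_self_add_sum_ne_eq_zero [Fintype ι] [DecidableEq ι] (hy : ∑ j, y j = 0) (i : ι) :
    ⁅x i, y i⁆ + ∑ j, (if i ≠ j then ⁅x i, y j⁆ else 0) = 0 := by
  rw [← Finset.sum_filter, Finset.filter_ne,
    Finset.add_sum_erase _ (⁅x i, y ·⁆) (Finset.mem_univ i), ← lie_sum, hy, lie_zero]

namespace IsHalfElliptic

theorem of_lt [LinearOrder ι] (lie : ∀ i j, i < j → ⁅x i, x j⁆ = 0)
    (comm : ∀ i j, i < j → ⁅x i, y j⁆ = ⁅x j, y i⁆)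
    (lie_lie : ∀ i j k, i < j → j < k → ⁅x k, ⁅x i, y j⁆⁆ = 0)
    (add_lie_lie : ∀ i j, i < j → ⁅x i + x j, ⁅x i, y j⁆⁆ = 0) : IsHalfElliptic x y := by
  have hxx (i j : ι) : ⁅x i, x j⁆ = 0 := by
    rcases lt_trichotomy i j with hij | rfl | hij
    · exact lie i j hij
    · exact lie_self _
    · rw [← lie_skew, lie j i hij, neg_zero]
  have hxy (i j : ι) : ⁅x i, y j⁆ = ⁅x j, y i⁆ := by
    rcases lt_trichotomy i j with hij | rfl | hij
    · exact comm i j hij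
    · rfl
    · exact (comm j i hij).symm
  refine ⟨hxx, hxy, lie_lie_eq_zero_of_lt hxx hxy lie_lie, fun {i j} hij => ?_⟩
  rcases hij.lt_or_gt with hij | hij
  · exact add_lie_lie i j hij
  · rw [hxy, add_comm, add_lie_lie j i hij]

theorem comp (h : IsHalfElliptic x y) {f : κ → ι} (hf : Function.Injective f) :
    IsHalfElliptic (x ∘ f) (y ∘ f) where
  lie_eq_zero _ _ := h.lie_eq_zero _ _
  lie_comm _ _ := h.lie_comm _ _
  lie_lie_eq_zero hij hik hjk := h.lie_lie_eq_zero (hf.ne hij) (hf.ne hik) (hf.ne hjk)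
  add_lie_lie_eq_zero hij := h.add_lie_lie_eq_zero (hf.ne hij)

theorem sum_lie_lie_eq_zero [Fintype ι] (h : IsHalfElliptic x y) {i j : ι} (hij : i ≠ j) :
    ⁅∑ k, x k, ⁅x i, y j⁆⁆ = 0 :=
  (sum_lie_lie_eq_add_lie_lie hij fun _ => h.lie_lie_eq_zero hij).trans (h.add_lie_lie_eq_zero hij)

end IsHalfElliptic

theorem isHalfElliptic_snocNegSum {n : ℕ} {x y : Fin n → L} (h : IsHalfElliptic x y) :
    IsHalfElliptic (snocNegSum x) (snocNegSum y) := by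
  have hxx (i j) : ⁅snocNegSum x i, snocNegSum x j⁆ = 0 := by
    cases i using Fin.lastCases <;> cases j using Fin.lastCases <;>
      simp [lie_sum, sum_lie, h.lie_eq_zero]
  have hxy (i j) : ⁅snocNegSum x i, snocNegSum y j⁆ = ⁅snocNegSum x j, snocNegSum y i⁆ := by
    cases i using Fin.lastCases <;> cases j using Fin.lastCases <;>
      simp [-lie_skew, lie_sum, sum_lie, h.lie_comm]
  have hlie {i j k} : i ≠ j → i ≠ k → j ≠ k →
      ⁅snocNegSum x k, ⁅snocNegSum x i, snocNegSum y j⁆⁆ = 0 := by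
    refine lie_lie_eq_zero_of_lt hxx hxy fun i j k hij hjk => ?_
    obtain ⟨j, rfl⟩ := Fin.exists_castSucc_eq.2 (Fin.ne_last_of_lt hjk)
    obtain ⟨i, rfl⟩ := Fin.exists_castSucc_eq.2 (Fin.ne_last_of_lt hij)
    rw [Fin.castSucc_lt_castSucc_iff] at hij
    rw [snocNegSum_castSucc, snocNegSum_castSucc]
    cases k using Fin.lastCases with
    | last => rw [snocNegSum_last, neg_lie, h.sum_lie_lie_eq_zero hij.ne, neg_zero]
    | cast k =>
      rw [Fin.castSucc_lt_castSucc_iff] at hjk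
      rw [snocNegSum_castSucc, h.lie_lie_eq_zero hij.ne (hij.trans hjk).ne hjk.ne]
  refine ⟨hxx, hxy, hlie, fun hij => ?_⟩
  rw [← sum_lie_lie_eq_add_lie_lie hij fun _ => hlie hij, sum_snocNegSum, zero_lie]

theorem isElliptic_iff_forall_lt [LinearOrder ι] :
    IsElliptic x y ↔
      (∀ i j, i < j → ⁅x i, x j⁆ = 0) ∧ (∀ i j, i < j → ⁅y i, y j⁆ = 0) ∧
      (∀ i j, i < j → ⁅x i, y j⁆ - ⁅x j, y i⁆ = 0) ∧
      (∀ i j, i < j → ⁅⁅x j, y i⁆, y i + y j⁆ = 0) ∧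
      (∀ i j, i < j → ⁅x j + x i, ⁅y i, x j⁆⁆ = 0) ∧
      (∀ i j k, i < j → j < k → ⁅y k, ⁅y i, x j⁆⁆ = 0) ∧
      (∀ i j k, i < j → j < k → ⁅x k, ⁅y i, x j⁆⁆ = 0) := by
  have add_lie_lie_y (i j) : ⁅⁅x j, y i⁆, y i + y j⁆ = ⁅y i + y j, ⁅y i, x j⁆⁆ := by
    rw [← lie_skew, ← lie_skew (x j), lie_neg, neg_neg]
  have lie_lie_x (hxy : ∀ i j, ⁅x i, y j⁆ = ⁅x j, y i⁆) (a : L) (i j) :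
      ⁅a, ⁅y i, x j⁆⁆ = -⁅a, ⁅x i, y j⁆⁆ := by
    rw [← lie_skew (y i), lie_neg, hxy]
  constructor
  · rintro ⟨hx, hy⟩
    refine ⟨fun i j _ => hx.lie_eq_zero i j, fun i j _ => hy.lie_eq_zero i j,
      fun i j _ => sub_eq_zero.2 (hx.lie_comm i j), fun i j hij => ?_, fun i j hij => ?_,
      fun i j k hij hjk => hy.lie_lie_eq_zero hij.ne (hij.trans hjk).ne hjk.ne,
      fun i j k hij hjk => ?_⟩
    · rw [add_lie_lie_y, hy.add_lie_lie_eq_zero hij.ne]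
    · rw [lie_lie_x hx.lie_comm, add_comm, hx.add_lie_lie_eq_zero hij.ne, neg_zero]
    · rw [lie_lie_x hx.lie_comm, hx.lie_lie_eq_zero hij.ne (hij.trans hjk).ne hjk.ne, neg_zero]
  · simp only [add_lie_lie_y, sub_eq_zero]
    rintro ⟨hxx, hyy, hxy, hyadd, hxadd, hylie, hxlie⟩
    refine ⟨.of_lt hxx hxy (fun i j k hij hjk => ?_) fun i j hij => ?_,
      .of_lt hyy (fun i j hij => ?_) hylie hyadd⟩
    · rw [hxy i j hij, ← lie_skew (x j), lie_neg, hxlie i j k hij hjk, neg_zero]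
    · rw [hxy i j hij, ← lie_skew (x j), lie_neg, add_comm, hxadd i j hij, neg_zero]
    · rw [← lie_skew, ← hxy i j hij, lie_skew]

namespace IsElliptic

theorem comp (h : IsElliptic x y) {f : κ → ι} (hf : Function.Injective f) :
    IsElliptic (x ∘ f) (y ∘ f) :=
  ⟨h.left.comp hf, h.right.comp hf⟩

theorem right_lie_lie_eq_zero (h : IsElliptic x y) {i j k : ι} (hij : i ≠ j) (hik : i ≠ k)
    (hjk : j ≠ k) : ⁅y k, ⁅x i, y j⁆⁆ = 0 := by
  rw [← lie_skew (x i), lie_neg, h.right.lie_lie_eq_zero hij.symm hjk hik, neg_zero]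

theorem right_add_lie_lie_eq_zero (h : IsElliptic x y) {i j : ι} (hij : i ≠ j) :
    ⁅y i + y j, ⁅x i, y j⁆⁆ = 0 := by
  rw [← lie_skew (x i), lie_neg, add_comm, h.right.add_lie_lie_eq_zero hij.symm, neg_zero]

theorem lie_lie_add_lie_eq_zero (h : IsElliptic x y) {i j k : ι} (hij : i ≠ j) (hik : i ≠ k)
    (hjk : j ≠ k) : ⁅⁅x i, y j⁆, ⁅x i, y k⁆ + ⁅x j, y k⁆⁆ = 0 := by
  have hx : ⁅⁅x i, y j⁆, x i + x j⁆ = 0 := by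
    rw [← lie_skew, h.left.add_lie_lie_eq_zero hij, neg_zero]
  have hy : ⁅⁅x i, y j⁆, y k⁆ = 0 := by
    rw [← lie_skew, h.right_lie_lie_eq_zero hij hik hjk, neg_zero]
  rw [← add_lie, leibniz_lie, hx, hy, zero_lie, lie_zero, add_zero]

theorem lie_lie_lie_eq_zero (h : IsElliptic x y) {i j k l : ι} (hkl : k ≠ l) (hik : i ≠ k)
    (hil : i ≠ l) (hjk : j ≠ k) (hjl : j ≠ l) : ⁅⁅x i, y j⁆, ⁅x k, y l⁆⁆ = 0 := by
  rw [lie_lie, h.left.lie_lie_eq_zero hkl hik.symm hil.symm,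
    h.right_lie_lie_eq_zero hkl hjk.symm hjl.symm, lie_zero, lie_zero, sub_zero]

end IsElliptic

theorem isElliptic_snocNegSum {n : ℕ} {x y : Fin n → L} (h : IsElliptic x y) :
    IsElliptic (snocNegSum x) (snocNegSum y) :=
  ⟨isHalfElliptic_snocNegSum h.left, isHalfElliptic_snocNegSum h.right⟩

end Elliptic

section PAlg

variable {L : Type*} [LieRing L] [LieAlgebra ℚ L] {n : ℕ}

theorem forall_pRel_eq_zero_iff (f : FreeLieAlgebra ℚ (PGen n) →ₗ⁅ℚ⁆ L) :
    (∀ z ∈ pRel n, f z = 0) ↔ IsElliptic (fun i => f (pX i)) (fun i => f (pY i)) := by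
  simp only [isElliptic_iff_forall_lt, pRel, Set.mem_union, Set.mem_ofPred_eq, or_imp, forall_and,
    forall_exists_index, and_imp, and_assoc, forall_comm (α := FreeLieAlgebra ℚ (PGen n)),
    forall_eq, LieHom.map_lie, map_add, map_sub]

theorem isElliptic_pMk (n : ℕ) :
    IsElliptic (fun i => pMk n (pX i)) (fun i => pMk n (pY i)) :=
  (forall_pRel_eq_zero_iff (lieQuotientMk (pIdeal n))).1 fun _ => lieQuotientMk_lieSpan_eq_zero

/-- The homomorphism out of `P_n` determined by elliptic families. -/
noncomputable def pLift {x y : Fin n → L} (h : IsElliptic x y) : PAlg n →ₗ⁅ℚ⁆ L :=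
  lieSpanQuotientLift (pRel n) (FreeLieAlgebra.lift ℚ (Sum.elim x y)) <|
    (forall_pRel_eq_zero_iff _).2 (by simpa [pX, pY] using h)

@[simp]
theorem pLift_pX {x y : Fin n → L} (h : IsElliptic x y) (i : Fin n) :
    pLift h (pMk n (pX i)) = x i :=
  FreeLieAlgebra.lift_of_apply (Sum.elim x y) (Sum.inl i)

@[simp]
theorem pLift_pY {x y : Fin n → L} (h : IsElliptic x y) (i : Fin n) :
    pLift h (pMk n (pY i)) = y i :=
  FreeLieAlgebra.lift_of_apply (Sum.elim x y) (Sum.inr i)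

theorem pAlg_hom_ext {f g : PAlg n →ₗ⁅ℚ⁆ L} (hX : ∀ i, f (pMk n (pX i)) = g (pMk n (pX i)))
    (hY : ∀ i, f (pMk n (pY i)) = g (pMk n (pY i))) : f = g :=
  lieQuotient_hom_ext <| FreeLieAlgebra.hom_ext <| Sum.forall.2 ⟨hX, hY⟩

end PAlg

section T1Bar

variable {L : Type*} [LieRing L] [LieAlgebra ℚ L] {n : ℕ}

theorem forall_t1Rel_eq_zero {f : FreeLieAlgebra ℚ (ElGen n) →ₗ⁅ℚ⁆ L}
    (h : IsElliptic (fun i => f (genX i)) (fun i => f (genY i)))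
    (hT : ∀ i j hij, f (genT i j hij) = ⁅f (genX i), f (genY j)⁆)
    (hY : ∑ i, f (genY i) = 0) : ∀ z ∈ t1Rel n, f z = 0 := by
  rintro z ((((((((((⟨i, j, hij, rfl⟩ | ⟨i, j, hij, rfl⟩) | ⟨i, j, -, rfl⟩) | ⟨i, j, -, rfl⟩) |
    ⟨i, rfl⟩) | ⟨i, j, k, hij, hik, hjk, rfl⟩) | ⟨i, j, k, l, -, hkl, hik, hil, hjk, hjl, rfl⟩) |
    ⟨i, j, k, hjk, hij, hik, rfl⟩) | ⟨i, j, k, hjk, hij, hik, rfl⟩) | ⟨i, j, hij, rfl⟩) |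
    ⟨i, j, hij, rfl⟩)
  all_goals simp only [LieHom.map_lie, map_add, map_sub, hT]
  · exact sub_eq_zero.2 (h.left.lie_comm i j)
  · exact sub_self _
  · exact h.left.lie_eq_zero i j
  · exact h.right.lie_eq_zero i j
  · simpa only [map_sum, apply_dite f, map_zero, hT, dite_eq_ite] using
      lie_self_add_sum_ne_eq_zero (x := fun i => f (genX i)) hY i
  · exact h.lie_lie_add_lie_eq_zero hij hik hjk
  · exact h.lie_lie_lie_eq_zero hkl hik hil hjk hjl
  · exact h.left.lie_lie_eq_zero hjk hij.symm hik.symm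
  · exact h.right_lie_lie_eq_zero hjk hij.symm hik.symm
  · exact h.left.add_lie_lie_eq_zero hij
  · exact h.right_add_lie_lie_eq_zero hij

theorem isElliptic_and_map_genT_of_forall_t1Rel_eq_zero {f : FreeLieAlgebra ℚ (ElGen n) →ₗ⁅ℚ⁆ L}
    (h : ∀ z ∈ t1Rel n, f z = 0) :
    IsElliptic (fun i => f (genX i)) (fun i => f (genY i)) ∧
      ∀ i j hij, f (genT i j hij) = ⁅f (genX i), f (genY j)⁆ := by
  simp only [t1Rel, Set.mem_union, Set.mem_ofPred_eq, or_imp, forall_and, forall_exists_index,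
    and_imp, and_assoc, forall_comm (α := FreeLieAlgebra ℚ (ElGen n)), forall_eq, LieHom.map_lie,
    map_add, map_sub, sub_eq_zero] at h
  obtain ⟨hTsymm, hT, hXX, hYY, -, -, -, hXT, hYT, hXaddT, hYaddT⟩ := h
  have hXY (i j) (hij : i < j) : ⁅f (genX i), f (genY j)⁆ = ⁅f (genX j), f (genY i)⁆ := by
    rw [← hT i j hij.ne, ← hT j i hij.ne', hTsymm]
  have hYX (i j) (hij : i < j) : ⁅f (genY i), f (genX j)⁆ = -f (genT i j hij.ne) := by
    rw [← lie_skew, ← hXY i j hij, hT]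
  refine ⟨⟨.of_lt (fun i j hij => hXX i j hij.ne) hXY (fun i j k hij hjk => ?_) fun i j hij => ?_,
    .of_lt (fun i j hij => hYY i j hij.ne) (fun i j hij => ?_) (fun i j k hij hjk => ?_)
      fun i j hij => ?_⟩, hT⟩
  · rw [← hT i j hij.ne, hXT k i j hij.ne (hij.trans hjk).ne' hjk.ne']
  · rw [← hT i j hij.ne, hXaddT]
  · rw [← lie_skew, ← hXY i j hij, lie_skew]
  · rw [hYX i j hij, lie_neg, hYT k i j hij.ne (hij.trans hjk).ne' hjk.ne', neg_zero]
  · rw [hYX i j hij, lie_neg, hYaddT, neg_zero]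

/-- The quotient map `t1BarMk` as a homomorphism of Lie algebras. -/
noncomputable def t1BarMkHom (n : ℕ) : FreeLieAlgebra ℚ (ElGen n) →ₗ⁅ℚ⁆ t1Bar n :=
  (lieQuotientMk (centralIdeal n)).comp (lieQuotientMk (t1Ideal n))

theorem t1BarMkHom_t1Rel_eq_zero : ∀ z ∈ t1Rel n, t1BarMkHom n z = 0 := fun _ hz =>
  (congrArg _ (lieQuotientMk_lieSpan_eq_zero hz)).trans (map_zero (lieQuotientMk (centralIdeal n)))

theorem isElliptic_t1BarMk (n : ℕ) :
    IsElliptic (fun i => t1BarMk n (genX i)) (fun i => t1BarMk n (genY i)) :=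
  (isElliptic_and_map_genT_of_forall_t1Rel_eq_zero t1BarMkHom_t1Rel_eq_zero).1

theorem t1BarMk_genT (i j : Fin n) (hij : i ≠ j) :
    t1BarMk n (genT i j hij) = ⁅t1BarMk n (genX i), t1BarMk n (genY j)⁆ :=
  (isElliptic_and_map_genT_of_forall_t1Rel_eq_zero t1BarMkHom_t1Rel_eq_zero).2 i j hij

theorem sum_t1BarMk_genX (n : ℕ) : ∑ i, t1BarMk n (genX i) = 0 :=
  (map_sum (t1BarMkHom n) _ _).symm.trans <|
    lieQuotientMk_lieSpan_eq_zero (L := t1 n) (Set.mem_insert _ _)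

theorem sum_t1BarMk_genY (n : ℕ) : ∑ i, t1BarMk n (genY i) = 0 :=
  (map_sum (t1BarMkHom n) _ _).symm.trans <|
    lieQuotientMk_lieSpan_eq_zero (L := t1 n) (Set.mem_insert_of_mem _ rfl)

/-- The homomorphism out of `t̄_{1,n}` determined by elliptic families with vanishing sums. -/
noncomputable def t1BarLift {x y : Fin n → L} (h : IsElliptic x y) (hx : ∑ i, x i = 0)
    (hy : ∑ i, y i = 0) : t1Bar n →ₗ⁅ℚ⁆ L :=
  let f : FreeLieAlgebra ℚ (ElGen n) →ₗ⁅ℚ⁆ L :=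
    FreeLieAlgebra.lift ℚ (Sum.elim x (Sum.elim y fun p => ⁅x p.1.1, y p.1.2⁆))
  lieSpanQuotientLift _ (lieSpanQuotientLift (t1Rel n) f <| forall_t1Rel_eq_zero
    (by simpa [f, genX, genY] using h) (by simp [f, genX, genY, genT])
    (by simpa [f, genY] using hy)) <| by
      rintro z (rfl | rfl)
      · exact (map_sum f _ _).trans (by simpa [f, genX] using hx)
      · exact (map_sum f _ _).trans (by simpa [f, genY] using hy)

@[simp]
theorem t1BarLift_genX {x y : Fin n → L} (h : IsElliptic x y) (hx : ∑ i, x i = 0)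
    (hy : ∑ i, y i = 0) (i : Fin n) : t1BarLift h hx hy (t1BarMk n (genX i)) = x i :=
  FreeLieAlgebra.lift_of_apply (Sum.elim x _) (Sum.inl i)

@[simp]
theorem t1BarLift_genY {x y : Fin n → L} (h : IsElliptic x y) (hx : ∑ i, x i = 0)
    (hy : ∑ i, y i = 0) (i : Fin n) : t1BarLift h hx hy (t1BarMk n (genY i)) = y i :=
  FreeLieAlgebra.lift_of_apply (Sum.elim x (Sum.elim y _)) (Sum.inr (Sum.inl i))

theorem t1Bar_hom_ext {f g : t1Bar n →ₗ⁅ℚ⁆ L}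
    (hX : ∀ i, f (t1BarMk n (genX i)) = g (t1BarMk n (genX i)))
    (hY : ∀ i, f (t1BarMk n (genY i)) = g (t1BarMk n (genY i))) : f = g := by
  refine lieQuotient_hom_ext <| lieQuotient_hom_ext <| FreeLieAlgebra.hom_ext ?_
  rintro (i | i | ⟨⟨i, j⟩, hij⟩)
  · exact hX i
  · exact hY i
  · change f (t1BarMk n (genT i j hij)) = g (t1BarMk n (genT i j hij))
    rw [t1BarMk_genT, LieHom.map_lie, LieHom.map_lie, hX, hY]

theorem t1Bar_hom_ext_castSucc {f g : t1Bar (n + 1) →ₗ⁅ℚ⁆ L}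
    (hX : ∀ i : Fin n,
      f (t1BarMk (n + 1) (genX i.castSucc)) = g (t1BarMk (n + 1) (genX i.castSucc)))
    (hY : ∀ i : Fin n,
      f (t1BarMk (n + 1) (genY i.castSucc)) = g (t1BarMk (n + 1) (genY i.castSucc))) : f = g := by
  have sum_map {z : Fin (n + 1) → t1Bar (n + 1)} (hz : ∑ i, z i = 0)
      (f : t1Bar (n + 1) →ₗ⁅ℚ⁆ L) : ∑ i, f (z i) = 0 := by
    rw [← map_sum, hz, map_zero]
  have hsumX := sum_map (sum_t1BarMk_genX (n + 1))
  have hsumY := sum_map (sum_t1BarMk_genY (n + 1))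
  exact t1Bar_hom_ext (congrFun (eq_of_castSucc_eq_of_sum_eq_zero hX (hsumX f) (hsumX g)))
    (congrFun (eq_of_castSucc_eq_of_sum_eq_zero hY (hsumY f) (hsumY g)))

end T1Bar

/-- The isomorphism between `P_n` and `t̄_{1,n+1}`: it sends the generators of `P_n` to the first
`n` pairs of generators of `t̄_{1,n+1}`, and its inverse sends the last pair to `-∑ X_i`,
`-∑ Y_i`. -/
noncomputable def pAlgEquivT1Bar (n : ℕ) : PAlg n ≃ₗ⁅ℚ⁆ t1Bar (n + 1) :=
  let toT1Bar := pLift ((isElliptic_t1BarMk (n + 1)).comp (Fin.castSucc_injective n))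
  let toPAlg := t1BarLift (isElliptic_snocNegSum (isElliptic_pMk n)) (sum_snocNegSum _)
    (sum_snocNegSum _)
  have left_inv : toPAlg.comp toT1Bar = LieHom.id := pAlg_hom_ext
    (fun i => by simp [toT1Bar, toPAlg]) (fun i => by simp [toT1Bar, toPAlg])
  have right_inv : toT1Bar.comp toPAlg = LieHom.id := t1Bar_hom_ext_castSucc
    (fun i => by simp [toT1Bar, toPAlg]) (fun i => by simp [toT1Bar, toPAlg])
  { toT1Bar with
    invFun := toPAlg
    left_inv := LieHom.congr_fun left_inv
    right_inv := LieHom.congr_fun right_inv }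

theorem pAlgEquivT1Bar_pX {n : ℕ} (i : Fin n) :
    pAlgEquivT1Bar n (pMk n (pX i)) = t1BarMk (n + 1) (genX i.castSucc) :=
  pLift_pX ((isElliptic_t1BarMk (n + 1)).comp (Fin.castSucc_injective n)) i

theorem pAlgEquivT1Bar_pY {n : ℕ} (i : Fin n) :
    pAlgEquivT1Bar n (pMk n (pY i)) = t1BarMk (n + 1) (genY i.castSucc) :=
  pLift_pY ((isElliptic_t1BarMk (n + 1)).comp (Fin.castSucc_injective n)) i

/-- the assignment `X_i ↦ X_i`, `Y_i ↦ Y_i` (indices viewed among the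
`n+1` indices of `t̄_{1,n+1}`) determines a well-defined Lie algebra homomorphism
`P_n → t̄_{1,n+1}` which is an isomorphism; i.e. `t̄_{1,n+1}` admits the presentation `P_n`. -/
theorem stmt_18 (n : ℕ) (hn : 1 ≤ n) :
    ∃ φ : PAlg n →ₗ⁅ℚ⁆ t1Bar (n + 1),
      (∀ i : Fin n, φ (pMk n (pX i)) = t1BarMk (n + 1) (genX i.castSucc)) ∧
      (∀ i : Fin n, φ (pMk n (pY i)) = t1BarMk (n + 1) (genY i.castSucc)) ∧
      Function.Bijective φ := by
  exact ⟨(pAlgEquivT1Bar n).toLieHom, pAlgEquivT1Bar_pX, pAlgEquivT1Bar_pY,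
    (pAlgEquivT1Bar n).bijective⟩
end
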